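/- Let λ ≥ 2 be an integer and let (z, y) with z : V → {0,1}, y : E → {0,1} satisfy the design constraints of (HLPLF-λ). Then for every nonempty subset S ⊂ V with |S| ≤ λ − 1 and every k ∈ S, the inequality y(δ(S)) + y_{kk} ≥ λ z_k holds. That is, the strengthened connectivity constraints are valid for (HLPLF-λ) on all subsets of cardinality at most λ − 1. -/

import Mathlib

open Finset

/-- The cut-set `δ(S)`: the set of (non-loop) edges with one endpoint in `S` and the other
outside `S`. -/
def cutset {V : Type*} [Fintype V] [DecidableEq V] (S : Finset V) : Finset (Sym2 V) :=
  Finset.univ.filter (fun e : Sym2 V => ∃ k l : V, k ∈ S ∧ l ∉ S ∧ e = s(k, l))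

/-- `y(δ(S))`: the number of activated hub edges in the cut-set of `S` (relative to the
indicator vector `y`). -/
def cutVal {V : Type*} [Fintype V] [DecidableEq V] (y : Sym2 V → ℝ) (S : Finset V) : ℝ :=
  ∑ e ∈ cutset S, y e

/-- For any design `(z, y)` satisfying the design constraints of (HLPLF-λ), the
strengthened connectivity constraints `y(δ(S)) + y_{kk} ≥ λ z_k` are valid for every
nonempty proper subset `S ⊂ V` with `|S| ≤ λ − 1` and every `k ∈ S`. -/
theorem strengthened_connectivity_valid
    {V : Type*} [Fintype V] [DecidableEq V]
    (lam : ℤ) (hlam : 2 ≤ lam)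
    (z : V → ℝ) (y : Sym2 V → ℝ)
    (hz : ∀ k : V, z k = 0 ∨ z k = 1)
    (hy : ∀ e : Sym2 V, y e = 0 ∨ y e = 1)
    (hyz : ∀ k l : V, y s(k, l) ≤ z k ∧ y s(k, l) ≤ z l)
    (hcut : ∀ S : Finset V, 2 ≤ S.card → ∀ k ∈ S, ∀ l ∉ S,
        (lam : ℝ) * (z k + z l - 1) ≤ cutVal y S + y s(k, k))
    (hsingle : ∀ k : V, (lam : ℝ) * z k ≤ cutVal y {k} + y s(k, k))
    (S : Finset V) (hSne : S.Nonempty) (hSproper : S ≠ Finset.univ)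
    (hcard : (S.card : ℤ) ≤ lam - 1) :
    ∀ k ∈ S, (lam : ℝ) * z k ≤ cutVal y S + y s(k, k) := by
  intro k hk
  have hy0 : ∀ e, 0 ≤ y e := fun e => by rcases hy e with h | h <;> simp [h]
  have hy1 : ∀ e, y e ≤ 1 := fun e => by rcases hy e with h | h <;> simp [h]
  have hc0 : 0 ≤ cutVal y S := Finset.sum_nonneg (fun e _ => hy0 e)
  rcases hz k with hzk | hzk
  · rw [hzk]
    have := hy0 s(k, k)
    linarith
  by_cases h2 : 2 ≤ S.card
  · by_cases hex : ∃ l, l ∉ S ∧ z l = 1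
    · obtain ⟨l, hl, hzl⟩ := hex
      have := hcut S h2 k hk l hl
      rw [hzl] at this
      linarith
    · exfalso
      have hbound : cutVal y {k} ≤ ((S.erase k).card : ℝ) := by
        have h1 : cutVal y {k} ≤ ∑ e ∈ cutset {k},
            (if e ∈ (S.erase k).image (fun l => s(k, l)) then (1 : ℝ) else 0) := by
          apply Finset.sum_le_sum
          intro e he
          split_ifs with hmem
          · exact hy1 e
          · obtain ⟨a, l, ha, hl, rfl⟩ := (Finset.mem_filter.mp he).2
            rw [Finset.mem_singleton] at ha hl
            subst ha
            have hlS : l ∉ S := fun h => hmem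
              (Finset.mem_image.mpr ⟨l, Finset.mem_erase.mpr ⟨hl, h⟩, rfl⟩)
            have hzl : z l = 0 := (hz l).resolve_right (fun h => hex ⟨l, hlS, h⟩)
            have := (hyz a l).2
            linarith
        rw [Finset.sum_boole] at h1
        refine h1.trans ?_
        have h3 : ((cutset {k}).filter
            (fun e => e ∈ (S.erase k).image (fun l => s(k, l)))).card ≤ (S.erase k).card :=
          (Finset.card_le_card (fun e he => (Finset.mem_filter.mp he).2)).trans
            Finset.card_image_le
        exact_mod_cast h3
      have hs := hsingle k
      have he : ((S.erase k).card : ℝ) + 1 = S.card := by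
        exact_mod_cast Finset.card_erase_add_one hk
      have hc : (S.card : ℝ) ≤ (lam : ℝ) - 1 := by exact_mod_cast hcard
      have := hy1 s(k, k)
      rw [hzk] at hs
      linarith
  · have h1 : S.card = 1 := by
      have := hSne.card_pos
      omega
    obtain ⟨a, rfl⟩ := Finset.card_eq_one.mp h1
    rw [Finset.mem_singleton] at hk
    subst hk
    exact hsingle k
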